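/- Let Λ = {λ_1,…,λ_m, μ_1, μ̄_1,…,μ_n, μ̄_n} where λ_1,…,λ_m are real (m ≥ 1) and μ_1,…,μ_n have nonzero imaginary part, and set N = m + 2n ≥ 2. Define the real (N−1)-by-(N−1) matrices B = diag(λ_2,…,λ_m) ⊕ (⊕_{i=1}^n [[Re μ_i, Im μ_i], [−Im μ_i, Re μ_i]]) and K = [[J_{(m−1)×(m−1)}, G],[G^T, C]], where G = J_{(m−1)×n} ⊗ [√2, 0] and C = J_{n×n} ⊗ [[2,0],[0,0]] (J denotes an all-ones matrix of the indicated size). Then the real matrix B(I − (1/N)K) + (λ_1/N)K has as its multiset of eigenvalues, counted with multiplicity, exactly the critical points of Λ. -/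

import Mathlib

open Polynomial

/-!
Call `v` a trace vector of a square matrix `A` of size `n` if `vᵀ Aʲ v = tr Aʲ` for all `j`. By
Cayley–Hamilton the functional `M ↦ vᵀ M v - tr M` then vanishes on `adj (X - A)` as well, so that
`vᵀ adj (X - A) v = tr adj (X - A)` is the derivative of the characteristic polynomial `χ` of `A`.
With `c = 1 / (n + 1)`, the matrix `A (1 - c v vᵀ) + l c v vᵀ` is a rank-one perturbation of `A`,
and the matrix determinant lemma gives `1 / (n + 1)` times the derivative of `(X - l) χ` as its
characteristic polynomial.

The block matrix `B` has the real trace vector `(1, …, 1, √2, 0, …, √2, 0)`, because both diagonal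
entries of each power of a block `[[a, b], [-b, a]]` agree, and `K` is this vector times its
transpose.
-/

section

open Matrix

variable {R ι κ : Type*} [CommRing R] [DecidableEq ι] [DecidableEq κ]

section

variable [Fintype ι] [Fintype κ]

theorem det_add_vecMulVec {A : Matrix ι ι R} (hA : IsLeftRegular A.det) (u v : ι → R) :
    (A + vecMulVec u v).det = A.det + v ⬝ᵥ A.adjugate *ᵥ u := by
  rcases isEmpty_or_nonempty ι with _ | _
  · simp
  have hpow : IsLeftRegular (A.det ^ (Fintype.card ι - 1)) := hA.pow _
  have hcard := Nat.sub_add_cancel (Fintype.card_pos (α := ι))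
  -- Multiplying by `adj A` turns the claim into the characteristic polynomial of a rank-one matrix,
  -- evaluated at `det A`.
  have hfactor : A.adjugate * (A + vecMulVec u v)
      = scalar ι A.det - vecMulVec (-(A.adjugate *ᵥ u)) v := by
    rw [mul_add, adjugate_mul, mul_vecMulVec, neg_vecMulVec, sub_neg_eq_add,
      smul_one_eq_diagonal, scalar_apply]
  refine hpow ?_
  calc A.det ^ (Fintype.card ι - 1) * (A + vecMulVec u v).det
      = (scalar ι A.det - vecMulVec (-(A.adjugate *ᵥ u)) v).det := by
        rw [← hfactor, det_mul, det_adjugate]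
    _ = A.det ^ (Fintype.card ι - 1 + 1)
          + v ⬝ᵥ A.adjugate *ᵥ u * A.det ^ (Fintype.card ι - 1) := by
        rw [← eval_charpoly, charpoly_vecMulVec, hcard, dotProduct_comm v]
        simp only [neg_dotProduct, neg_smul, sub_neg_eq_add, eval_add, eval_pow, eval_X,
          eval_smul, smul_eq_mul]
    _ = A.det ^ (Fintype.card ι - 1) * (A.det + v ⬝ᵥ A.adjugate *ᵥ u) := by ring

theorem derivative_det (A : Matrix ι ι R[X]) :
    derivative A.det = ∑ i, (A.updateRow i fun j => derivative (A i j)).det := by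
  simp only [← det_transpose (updateRow _ _ _), ← det_transpose A, det_apply', derivative_sum,
    derivative_mul, derivative_intCast, zero_mul, zero_add, derivative_prod_finset,
    Finset.mul_sum]
  rw [Finset.sum_comm]
  refine Finset.sum_congr rfl fun i _ => Finset.sum_congr rfl fun σ _ => ?_
  rw [← Finset.prod_erase_mul _ _ (Finset.mem_univ i)]
  congr 2
  · refine Finset.prod_congr rfl fun k hk => ?_
    simp [updateRow_ne (Finset.ne_of_mem_erase hk)]
  · simp

theorem derivative_charpoly (A : Matrix ι ι R) :
    derivative A.charpoly = A.charmatrix.adjugate.trace := by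
  rw [charpoly, derivative_det]
  refine Finset.sum_congr rfl fun i _ => ?_
  rw [diag_apply, adjugate_apply]
  congr 2
  ext j : 1
  obtain rfl | hij := eq_or_ne i j
  · simp
  · simp [charmatrix_apply_ne, hij.symm, hij]

theorem charmatrix_blockDiagonal (A : κ → Matrix ι ι R) :
    (blockDiagonal A).charmatrix = blockDiagonal fun i => (A i).charmatrix := by
  ext ⟨i, k⟩ ⟨j, l⟩ : 1
  by_cases hkl : k = l <;> simp [charmatrix_apply, blockDiagonal_apply, diagonal_apply, hkl]

theorem charpoly_blockDiagonal (A : κ → Matrix ι ι R) :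
    (blockDiagonal A).charpoly = ∏ i, (A i).charpoly := by
  simp only [charpoly, charmatrix_blockDiagonal, det_blockDiagonal]

theorem map_C_mul_adjugate_charmatrix (A : Matrix ι ι R) :
    A.map C * A.charmatrix.adjugate = (X : R[X]) • A.charmatrix.adjugate - A.charpoly • 1 := by
  have hA : A.map C = (X : R[X]) • 1 - A.charmatrix := by
    simp [charmatrix, smul_one_eq_diagonal]
  rw [charpoly, ← mul_adjugate, hA, sub_mul, smul_mul_assoc, one_mul]

theorem sum_coeff_charpoly_smul_map_C_pow (A : Matrix ι ι R) :
    ∑ j ∈ Finset.range (A.charpoly.natDegree + 1), C (A.charpoly.coeff j) • A.map C ^ j = 0 := by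
  have hcayley := congrArg C.mapMatrix A.aeval_self_charpoly
  simpa only [aeval_eq_sum_range, map_sum, RingHom.mapMatrix_apply,
    Matrix.map_smul' _ _ _ (map_mul C), Matrix.map_pow, Matrix.map_zero _ C_0] using hcayley

theorem trace_adjugate_charmatrix_mul_eq_zero {A : Matrix ι ι R} {W : Matrix ι ι R[X]}
    (hW : ∀ j : ℕ, (A.map C ^ j * W).trace = 0) : (A.charmatrix.adjugate * W).trace = 0 := by
  set P := A.charmatrix.adjugate
  -- Since `A P = X P - χ`, multiplying by `A` acts on `tr (P W)` as multiplication by `X`, so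
  -- Cayley–Hamilton gives `χ tr (P W) = 0`.
  have hshift (j : ℕ) : (A.map C ^ j * P * W).trace = X ^ j * (P * W).trace := by
    induction j with
    | zero => simp
    | succ j ih =>
      rw [pow_succ, mul_assoc _ (A.map C), map_C_mul_adjugate_charmatrix, mul_sub, mul_smul_comm,
        mul_smul_comm, mul_one, sub_mul, smul_mul_assoc, smul_mul_assoc, trace_sub, trace_smul,
        trace_smul, ih, hW, smul_zero, sub_zero, smul_eq_mul, pow_succ', mul_assoc]
  refine A.charpoly_monic.isRegular.left.mul_left_eq_zero_iff.mp ?_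
  calc A.charpoly * (P * W).trace
      = ((∑ j ∈ Finset.range (A.charpoly.natDegree + 1),
          C (A.charpoly.coeff j) • A.map C ^ j) * P * W).trace := by
        nth_rw 1 [as_sum_range_C_mul_X_pow A.charpoly]
        simp only [Finset.sum_mul, trace_sum, smul_mul_assoc, trace_smul, hshift, smul_eq_mul,
          mul_assoc (C _)]
    _ = 0 := by rw [sum_coeff_charpoly_smul_map_C_pow, zero_mul, zero_mul, trace_zero]

/-- Trace vectors in the sense of Pereira: the quadratic form of `v` agrees with the trace on all
polynomials in `A`, here tested on powers. The trace is not normalised, so `v ⬝ᵥ v` is the size of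
`A`; the form is bilinear, without conjugation. -/
def IsTraceVector (A : Matrix ι ι R) (v : ι → R) : Prop :=
  ∀ j : ℕ, v ⬝ᵥ (A ^ j) *ᵥ v = (A ^ j).trace

namespace IsTraceVector

theorem dotProduct_self {A : Matrix ι ι R} {v : ι → R} (h : IsTraceVector A v) :
    v ⬝ᵥ v = Fintype.card ι := by
  simpa using h 0

theorem diagonal (d : ι → R) : IsTraceVector (Matrix.diagonal d) 1 := fun j => by
  simp [Matrix.diagonal_pow, dotProduct, trace, mulVec_diagonal]

theorem fin_two {A : Matrix (Fin 2) (Fin 2) R} (hA : A 0 0 = A 1 1) {s : R} (hs : s * s = 2) :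
    IsTraceVector A ![s, 0] := by
  have hdiag (j : ℕ) : (A ^ j) 0 0 = (A ^ j) 1 1 := by
    induction j with
    | zero => simp
    | succ j ih =>
      have hcomm := congrFun₂ ((Commute.refl A).pow_left j).eq 0 0
      simp only [mul_apply, Fin.sum_univ_two] at hcomm
      simp only [pow_succ, mul_apply, Fin.sum_univ_two]
      linear_combination A 0 0 * ih + hcomm + (A ^ j) 1 1 * hA
  intro j
  rw [trace_fin_two, ← hdiag]
  simp only [dotProduct, mulVec, Fin.sum_univ_two, cons_val_zero, cons_val_one, mul_zero,
    add_zero, zero_mul]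
  linear_combination (A ^ j) 0 0 * hs

theorem reindex {A : Matrix ι ι R} {v : ι → R} (h : IsTraceVector A v) (e : ι ≃ κ) :
    IsTraceVector (Matrix.reindex e e A) (v ∘ e.symm) := fun j => by
  rw [← coe_reindexAlgEquiv R R, ← map_pow, coe_reindexAlgEquiv, reindex_apply,
    submatrix_mulVec_equiv, comp_equiv_dotProduct_comp_equiv, Equiv.symm_symm,
    Function.comp_assoc, e.symm_comp_self, Function.comp_id, h]
  exact (e.symm.sum_comp fun i => (A ^ j) i i).symm

theorem fromBlocks {A : Matrix ι ι R} {B : Matrix κ κ R} {v : ι → R} {w : κ → R}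
    (hA : IsTraceVector A v) (hB : IsTraceVector B w) :
    IsTraceVector (Matrix.fromBlocks A 0 0 B) (Sum.elim v w) := fun j => by
  simp [fromBlocks_diagonal_pow, fromBlocks_mulVec, hA j, hB j, trace, Sum.elim_comp_inl]

theorem blockDiagonal {A : κ → Matrix ι ι R} {v : κ → ι → R}
    (h : ∀ i, IsTraceVector (A i) (v i)) :
    IsTraceVector (Matrix.blockDiagonal A) (fun q => v q.2 q.1) := fun j => by
  rw [← blockDiagonal_pow, trace_blockDiagonal]
  refine Eq.trans ?_ (Finset.sum_congr rfl fun i _ => h i j)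
  simp [-blockDiagonal_pow, dotProduct, mulVec, Fintype.sum_prod_type_right, blockDiagonal_apply]

theorem dotProduct_adjugate_mulVec {A : Matrix ι ι R} {v : ι → R} (h : IsTraceVector A v) :
    (C ∘ v) ⬝ᵥ A.charmatrix.adjugate *ᵥ (C ∘ v) = derivative A.charpoly := by
  set W : Matrix ι ι R[X] := vecMulVec (C ∘ v) (C ∘ v) - 1
  have htrace (M : Matrix ι ι R[X]) : (M * W).trace = (C ∘ v) ⬝ᵥ M *ᵥ (C ∘ v) - M.trace := by
    rw [mul_sub, mul_one, trace_sub, mul_vecMulVec, trace_vecMulVec, dotProduct_comm]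
  have hW (j : ℕ) : (A.map C ^ j * W).trace = 0 := by
    have hmulVec : (A ^ j).map C *ᵥ (C ∘ v) = C ∘ ((A ^ j) *ᵥ v) :=
      funext fun i => (RingHom.map_mulVec C _ _ i).symm
    rw [← Matrix.map_pow, htrace, hmulVec, ← RingHom.map_dotProduct, h j, sub_eq_zero]
    exact AddMonoidHom.map_trace (C : R →+* R[X]) _
  rw [derivative_charpoly, ← sub_eq_zero, ← htrace]
  exact trace_adjugate_charmatrix_mul_eq_zero hW

theorem C_mul_charpoly {A : Matrix ι ι R} {v : ι → R} (h : IsTraceVector A v) (l : R) {c : R}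
    (hc : (Fintype.card ι + 1) * c = 1) :
    C (Fintype.card ι + 1 : R) * (A * (1 - c • vecMulVec v v) + (l * c) • vecMulVec v v).charpoly
      = derivative ((X - C l) * A.charpoly) := by
  set w : ι → R[X] := C ∘ v
  have hrank_one : (A * (1 - c • vecMulVec v v) + (l * c) • vecMulVec v v).charmatrix
      = A.charmatrix + vecMulVec (C c • ((X - C l) • w - A.charmatrix *ᵥ w)) w := by
    have hmulVec : A.charmatrix *ᵥ w = (X : R[X]) • w - C ∘ (A *ᵥ v) := by
      ext i : 1
      simp [charmatrix, sub_mulVec, RingHom.map_mulVec, w]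
    rw [hmulVec, mul_sub, mul_one, mul_smul_comm, mul_vecMulVec]
    ext i j : 1
    simp only [charmatrix, scalar_apply, RingHom.mapMatrix_apply, Matrix.sub_apply, map_apply,
      Matrix.add_apply, Matrix.smul_apply, vecMulVec_apply, smul_eq_mul, map_add, map_sub,
      map_mul, smul_vecMulVec, Pi.sub_apply, Pi.smul_apply, Function.comp_apply, w]
    ring
  have hw : w ⬝ᵥ w = (Fintype.card ι : R[X]) := by
    rw [← RingHom.map_dotProduct, h.dotProduct_self, map_natCast]
  have hquad : w ⬝ᵥ A.charmatrix.adjugate *ᵥ (C c • ((X - C l) • w - A.charmatrix *ᵥ w))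
      = C c * ((X - C l) * derivative A.charpoly - A.charpoly * (Fintype.card ι : R[X])) := by
    rw [mulVec_smul, mulVec_sub, mulVec_smul, mulVec_mulVec, adjugate_mul, smul_mulVec, one_mulVec,
      dotProduct_smul, dotProduct_sub, dotProduct_smul, dotProduct_smul,
      h.dotProduct_adjugate_mulVec, hw, smul_eq_mul, smul_eq_mul, smul_eq_mul, charpoly]
  have hC : ((Fintype.card ι : R[X]) + 1) * C c = 1 := by simpa using congrArg C hc
  rw [charpoly, hrank_one, det_add_vecMulVec A.charpoly_monic.isRegular.left, hquad]
  simp only [derivative_mul, derivative_X_sub_C, map_add, map_natCast, C_1, charpoly]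
  linear_combination
    ((X - C l) * derivative A.charmatrix.det - A.charmatrix.det * (Fintype.card ι : R[X])) * hC

end IsTraceVector

end

/-- The real block `[[a, b], [-b, a]]` of `z = a + b i`, with eigenvalues `z` and its conjugate. -/
def complexBlock (z : ℂ) : Matrix (Fin 2) (Fin 2) ℝ := !![z.re, z.im; -z.im, z.re]

theorem charpoly_complexBlock (z : ℂ) :
    (complexBlock z).charpoly.map (algebraMap ℝ ℂ) = (X - C z) * (X - C (starRingEnd ℂ z)) := by
  have hsum : C z + C (starRingEnd ℂ z) = 2 * C (z.re : ℂ) := by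
    rw [← C_add, Complex.add_conj, Complex.ofReal_mul, C_mul, Complex.ofReal_ofNat, map_ofNat]
  have hprod : C z * C (starRingEnd ℂ z) = C (z.re : ℂ) ^ 2 + C (z.im : ℂ) ^ 2 := by
    rw [← C_mul, Complex.mul_conj, Complex.normSq_apply]
    simp [sq]
  have hreal : (complexBlock z).charpoly = X ^ 2 - 2 * C z.re * X + (C z.re ^ 2 + C z.im ^ 2) := by
    simp only [charpoly_fin_two, complexBlock, trace_fin_two_of, det_fin_two_of, C_add, C_sub,
      C_mul, C_neg]
    ring
  simp only [hreal, Polynomial.map_add, Polynomial.map_sub, Polynomial.map_mul, Polynomial.map_pow,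
    Polynomial.map_ofNat, map_X, map_C, Complex.coe_algebraMap]
  linear_combination X * hsum - hprod

/-- The matrix `B` of the companion matrix: `lam` lists the real roots other than the
distinguished one, `mu` one root from each conjugate pair. `blockDiagonal` puts the block index
second, whence the reindexing. -/
def dCompanionB (lam : ι → ℝ) (mu : κ → ℂ) : Matrix (ι ⊕ κ × Fin 2) (ι ⊕ κ × Fin 2) ℝ :=
  fromBlocks (diagonal lam) 0 0
    (reindex (Equiv.prodComm _ _) (Equiv.prodComm _ _) (blockDiagonal fun i => complexBlock (mu i)))

/-- The vector `(1, …, 1, √2, 0, …, √2, 0)`, a common trace vector of the matrices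
`dCompanionB lam mu`. -/
noncomputable def dCompanionVec (ι κ : Type*) : ι ⊕ κ × Fin 2 → ℝ :=
  Sum.elim 1 fun q => ![√2, 0] q.2

/-- The matrix `K` of the companion matrix, `[[J, G], [Gᵀ, C]]` in the paper, written as the
rank-one matrix that it is. -/
noncomputable def dCompanionK (ι κ : Type*) : Matrix (ι ⊕ κ × Fin 2) (ι ⊕ κ × Fin 2) ℝ :=
  vecMulVec (dCompanionVec ι κ) (dCompanionVec ι κ)

variable [Fintype ι] [Fintype κ]

theorem isTraceVector_dCompanionB (lam : ι → ℝ) (mu : κ → ℂ) :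
    IsTraceVector (dCompanionB lam mu) (dCompanionVec ι κ) := by
  have hblock (i : κ) : IsTraceVector (complexBlock (mu i)) ![√2, 0] :=
    .fin_two rfl (Real.mul_self_sqrt zero_le_two)
  exact (IsTraceVector.diagonal lam).fromBlocks
    ((IsTraceVector.blockDiagonal hblock).reindex (Equiv.prodComm _ _))

theorem charpoly_dCompanionB (lam : ι → ℝ) (mu : κ → ℂ) :
    (dCompanionB lam mu).charpoly.map (algebraMap ℝ ℂ) =
      (∏ i, (X - C (lam i : ℂ))) * ∏ i, (X - C (mu i)) * (X - C (starRingEnd ℂ (mu i))) := by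
  rw [dCompanionB, charpoly_fromBlocks_zero₁₂, charpoly_diagonal, charpoly_reindex,
    charpoly_blockDiagonal, Polynomial.map_mul, Polynomial.map_prod, Polynomial.map_prod]
  simp [charpoly_complexBlock]

theorem C_mul_charpoly_dCompanion (l : ℝ) (lam : ι → ℝ) (mu : κ → ℂ) {N : ℕ}
    (hN : N = Fintype.card ι + 1 + 2 * Fintype.card κ) :
    C (N : ℂ) * ((dCompanionB lam mu * (1 - (N : ℝ)⁻¹ • dCompanionK ι κ)
        + (l / N) • dCompanionK ι κ).map (algebraMap ℝ ℂ)).charpoly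
      = derivative ((X - C (l : ℂ)) * ((∏ i, (X - C (lam i : ℂ))) *
          ∏ i, (X - C (mu i)) * (X - C (starRingEnd ℂ (mu i))))) := by
  have hcard : (Fintype.card (ι ⊕ κ × Fin 2) : ℝ) + 1 = N := by
    simp only [hN, Fintype.card_sum, Fintype.card_prod, Fintype.card_fin]
    push_cast
    ring
  have hN0 : (N : ℝ) ≠ 0 := by rw [← hcard]; positivity
  have hreal := (isTraceVector_dCompanionB lam mu).C_mul_charpoly l
    (hcard ▸ mul_inv_cancel₀ hN0)
  rw [hcard, ← dCompanionK, ← div_eq_mul_inv] at hreal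
  have hcomplex := congrArg (map (algebraMap ℝ ℂ)) hreal
  rw [Polynomial.map_mul, ← charpoly_map, ← derivative_map, Polynomial.map_mul,
    charpoly_dCompanionB] at hcomplex
  simpa only [Polynomial.map_sub, map_X, map_C, Complex.coe_algebraMap, Complex.ofReal_natCast]
    using hcomplex

theorem real_d_companion_general (l : ℝ) (lam : ι → ℝ) (mu : κ → ℂ) {N : ℕ}
    (hN : N = Fintype.card ι + 1 + 2 * Fintype.card κ) {Λ : Multiset ℂ}
    (hΛ : Λ = (l : ℂ) ::ₘ (Finset.univ.val.map fun i => (lam i : ℂ))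
      + Finset.univ.val.map mu + Finset.univ.val.map fun i => starRingEnd ℂ (mu i)) :
    ((dCompanionB lam mu * (1 - (N : ℝ)⁻¹ • dCompanionK ι κ)
        + (l / N) • dCompanionK ι κ).map (algebraMap ℝ ℂ)).charpoly.roots
      = (derivative (Λ.map fun z => X - C z).prod).roots := by
  have hprod : (Λ.map fun z => X - C z).prod = (X - C (l : ℂ)) * ((∏ i, (X - C (lam i : ℂ))) *
      ∏ i, (X - C (mu i)) * (X - C (starRingEnd ℂ (mu i)))) := by
    simp only [hΛ, Multiset.cons_add, Multiset.map_cons, Multiset.prod_cons, Multiset.map_add,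
      Multiset.map_map, Multiset.prod_add, Function.comp_def, Finset.prod_map_val,
      Finset.prod_mul_distrib, mul_assoc]
  have hN0 : (N : ℂ) ≠ 0 := by norm_cast; omega
  rw [hprod, ← C_mul_charpoly_dCompanion l lam mu hN, roots_C_mul _ hN0]

end

/-- a real construction of the d-companion matrix. For
Λ = {λ₁,…,λ_m, μ₁, μ̄₁,…,μ_n, μ̄_n} with the λᵢ real and the μᵢ non-real, and
N = m + 2n ≥ 2, the real matrix B(I - (1/N)K) + (λ₁/N)K (with B, K the block
matrices described in the paper, indexed here by Fin (m-1) ⊕ (Fin n × Fin 2))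
has as its multiset of eigenvalues (with multiplicity) exactly the critical
points of Λ. -/
theorem real_d_companion (m n : ℕ) (hm : 1 ≤ m)
    (N : ℕ) (hN : N = m + 2 * n) (hN2 : 2 ≤ N)
    (lam : Fin m → ℝ) (mu : Fin n → ℂ) (hmu : ∀ i, (mu i).im ≠ 0)
    (Λ : Multiset ℂ)
    (hΛ : Λ = (Finset.univ.val.map fun i : Fin m => ((lam i : ℂ)))
        + (Finset.univ.val.map fun i : Fin n => mu i)
        + (Finset.univ.val.map fun i : Fin n => (starRingEnd ℂ) (mu i)))
    (p : Polynomial ℂ) (hp : p = (Λ.map fun l => X - C l).prod)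
    (B K : Matrix (Fin (m - 1) ⊕ Fin n × Fin 2) (Fin (m - 1) ⊕ Fin n × Fin 2) ℝ)
    (hB : B = Matrix.of fun i j =>
      match i, j with
      | Sum.inl i, Sum.inl j =>
          if i = j then lam ⟨(i : ℕ) + 1, by have := i.isLt; omega⟩ else 0
      | Sum.inr (i, a), Sum.inr (j, b) =>
          if i = j then !![(mu i).re, (mu i).im; -(mu i).im, (mu i).re] a b else 0
      | _, _ => 0)
    (hK : K = Matrix.of fun i j =>
      match i, j with
      | Sum.inl _, Sum.inl _ => 1
      | Sum.inl _, Sum.inr (_, b) => if b = 0 then Real.sqrt 2 else 0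
      | Sum.inr (_, a), Sum.inl _ => if a = 0 then Real.sqrt 2 else 0
      | Sum.inr (_, a), Sum.inr (_, b) => if a = 0 ∧ b = 0 then 2 else 0)
    (M : Matrix (Fin (m - 1) ⊕ Fin n × Fin 2) (Fin (m - 1) ⊕ Fin n × Fin 2) ℝ)
    (hM : M = B * (1 - ((N : ℝ))⁻¹ • K) + ((lam ⟨0, by omega⟩) / (N : ℝ)) • K) :
    (M.map (algebraMap ℝ ℂ)).charpoly.roots = p.derivative.roots := by
  obtain ⟨m, rfl⟩ := Nat.exists_eq_add_of_le' hm
  have hB' : B = dCompanionB (ι := Fin m) (fun i => lam i.succ) mu := by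
    rw [hB]
    ext (i | ⟨i, a⟩) (j | ⟨j, b⟩) <;>
      simp [dCompanionB, complexBlock, Matrix.diagonal_apply, Matrix.blockDiagonal_apply, Fin.succ]
  have hK' : K = dCompanionK (Fin m) (Fin n) := by
    rw [hK]
    ext (i | ⟨i, a⟩) (j | ⟨j, b⟩) <;> (try fin_cases a) <;> (try fin_cases b) <;>
      simp [dCompanionK, dCompanionVec, Matrix.vecMulVec_apply]
  rw [hM, hB', hK', hp]
  exact real_d_companion_general (ι := Fin m) (lam 0) (fun i => lam i.succ) mu
    (by simpa using hN) (by simp [hΛ, Fin.univ_succ, Function.comp_def])
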